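/- Let g ≥ 3 be a real number and define F: ℝ → ℝ by F(x) = 2((16g − 18)x² + (24g − 25)x + 4(g − 1)) / ((4g + 3)x² + (6g + 5)x + (g + 1)). Set x₀ = (2(g − 3) + √(4g² + 21g − 39))/15. Then x₀ > 0 and F(x) ≤ F(x₀) for every x ≥ 0; that is, F attains its maximum on [0, ∞) at x₀. -/

import Mathlib

/-- For `g ≥ 3`, the limiting-slope function (odd-genus case) attains its
maximum on `[0, ∞)` at `x₀ = (2(g − 3) + √(4g² + 21g − 39))/15`. -/
theorem limit_slope_max_odd (g : ℝ) (hg : 3 ≤ g)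
    (F : ℝ → ℝ)
    (hF : ∀ x, F x = 2 * ((16 * g - 18) * x ^ 2 + (24 * g - 25) * x + 4 * (g - 1)) /
      ((4 * g + 3) * x ^ 2 + (6 * g + 5) * x + (g + 1)))
    (x₀ : ℝ) (hx₀ : x₀ = (2 * (g - 3) + Real.sqrt (4 * g ^ 2 + 21 * g - 39)) / 15) :
    0 < x₀ ∧ ∀ x, 0 ≤ x → F x ≤ F x₀ := by
  have hd : 0 < 4 * g ^ 2 + 21 * g - 39 := by nlinarith
  set s := Real.sqrt (4 * g ^ 2 + 21 * g - 39) with hs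
  have hspos : 0 < s := Real.sqrt_pos.mpr hd
  have hsq : s ^ 2 = 4 * g ^ 2 + 21 * g - 39 := Real.sq_sqrt hd.le
  have hpos : 0 < x₀ := by
    rw [hx₀]
    apply div_pos _ (by norm_num)
    linarith
  have hs' : s = 15 * x₀ - 2 * (g - 3) := by rw [hx₀]; ring
  have hQ : 15 * x₀ ^ 2 = 4 * (g - 3) * x₀ + (3 * g - 5) := by
    rw [hs'] at hsq
    linarith
  have hD : ∀ x : ℝ, 0 ≤ x → 0 < (4 * g + 3) * x ^ 2 + (6 * g + 5) * x + (g + 1) := by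
    intro x hx
    have h1 : 0 ≤ (4 * g + 3) * x ^ 2 := mul_nonneg (by linarith) (sq_nonneg x)
    have h2 : 0 ≤ (6 * g + 5) * x := mul_nonneg (by linarith) hx
    linarith
  refine ⟨hpos, fun x hx => ?_⟩
  rw [hF, hF, div_le_div_iff₀ (hD x hx) (hD x₀ hpos.le)]
  have hk : 0 ≤ 2 * ((x₀ - x) ^ 2 * s) := by positivity
  rw [hs'] at hk
  linear_combination hk + 2 * (x₀ - x) * hQ
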